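/- arXiv:1704.05836 — 7 statements merged into one kernel-verified Lean document; each statement's English description precedes it below -/
import Mathlib

section
/- There is a unique a ∈ (0, π/2) satisfying cos(a) + sin(a)/a = 1, and this a satisfies 1 − cos(a) > 0.738 > 1/(1 + 1/e). (In particular, the guarantee α = 1 − cos(a) of the paper's algorithm exceeds the bound 1/(1+1/e) conjectured by Hill and Kertz to be optimal.) -/
/-- On `(0, π/2)` the equation `cos a + sin a / a = 1` says that `a = cot (a / 2)`. -/
theorem cos_add_sin_div_eq_one_iff {a : ℝ} (ha : a ∈ Set.Ioo 0 (Real.pi / 2)) :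
    Real.cos a + Real.sin a / a = 1 ↔ a * Real.sin (a / 2) = Real.cos (a / 2) := by
  obtain ⟨h0, h1⟩ := ha
  have hs : 0 < Real.sin (a / 2) :=
    Real.sin_pos_of_pos_of_lt_pi (by linarith) (by linarith [Real.pi_pos])
  have hsin : Real.sin a = 2 * Real.sin (a / 2) * Real.cos (a / 2) := by
    rw [← Real.sin_two_mul]; ring_nf
  have hcos : Real.cos a = 1 - 2 * Real.sin (a / 2) ^ 2 := by
    rw [← Real.cos_two_mul_eq_one_sub]; ring_nf
  rw [hsin, hcos]
  constructor
  · intro h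
    field_simp at h
    have h' : Real.sin (a / 2) * (a * Real.sin (a / 2) - Real.cos (a / 2)) = 0 := by
      linarith
    linarith [(mul_eq_zero.mp h').resolve_left hs.ne']
  · intro h
    rw [← h]
    field_simp
    ring

theorem strictMonoOn_mul_sin_half_sub_cos_half :
    StrictMonoOn (fun a : ℝ => a * Real.sin (a / 2) - Real.cos (a / 2))
      (Set.Icc 0 (Real.pi / 2)) := by
  rintro x ⟨hx0, hx1⟩ y ⟨hy0, hy1⟩ hxy
  have hpi := Real.pi_pos
  have hsin : Real.sin (x / 2) ≤ Real.sin (y / 2) :=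
    Real.sin_le_sin_of_le_of_le_pi_div_two (by linarith) (by linarith) (by linarith)
  have hcos : Real.cos (y / 2) < Real.cos (x / 2) :=
    Real.cos_lt_cos_of_nonneg_of_le_pi (by linarith) (by linarith) (by linarith)
  have hs : 0 ≤ Real.sin (x / 2) :=
    Real.sin_nonneg_of_nonneg_of_le_pi (by linarith) (by linarith)
  have hmul := mul_le_mul hxy.le hsin hs hy0
  dsimp only
  linarith

theorem exists_mul_sin_half_eq_cos_half :
    ∃ a ∈ Set.Ioo 0 (Real.pi / 2), a * Real.sin (a / 2) = Real.cos (a / 2) := by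
  have hcont : ContinuousOn (fun a : ℝ => a * Real.sin (a / 2) - Real.cos (a / 2))
      (Set.Icc 0 (Real.pi / 2)) := by fun_prop
  have hpi := Real.pi_gt_three
  have hend : (0 : ℝ) < Real.pi / 2 * Real.sin (Real.pi / 2 / 2)
      - Real.cos (Real.pi / 2 / 2) := by
    have h4 : Real.pi / 2 / 2 = Real.pi / 4 := by ring
    rw [h4, Real.sin_pi_div_four, Real.cos_pi_div_four]
    have hsqrt : 0 < √(2 : ℝ) := by positivity
    nlinarith
  obtain ⟨a, ha, h⟩ := intermediate_value_Ioo (by positivity) hcont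
    (show (0 : ℝ) ∈ Set.Ioo _ _ from ⟨by norm_num, hend⟩)
  exact ⟨a, ha, sub_eq_zero.mp h⟩

theorem cos_lt_of_mul_sin_half_eq_cos_half {a : ℝ} (ha : a ∈ Set.Ioo 0 (Real.pi / 2))
    (h : a * Real.sin (a / 2) = Real.cos (a / 2)) : Real.cos a < 0.262 := by
  by_contra! hc
  obtain ⟨h0, h1⟩ := ha
  have hpi := Real.pi_pos
  have hcos : Real.cos a = 2 * Real.cos (a / 2) ^ 2 - 1 := by
    rw [← Real.cos_two_mul]; ring_nf
  have hhalf : Real.cos (a / 2) = 1 - 2 * Real.sin (a / 4) ^ 2 := by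
    rw [← Real.cos_two_mul_eq_one_sub]; ring_nf
  have hpyth := Real.sin_sq_add_cos_sq (a / 2)
  have hcos_sq : 0.631 ≤ Real.cos (a / 2) ^ 2 := by linarith
  have hcos_pos : 0 < Real.cos (a / 2) :=
    Real.cos_pos_of_mem_Ioo ⟨by linarith, by linarith⟩
  have ha_gt : 1.307 < a := by
    by_contra! hle
    have hsq : a ^ 2 ≤ 1.307 ^ 2 := pow_le_pow_left₀ h0.le hle 2
    have heq : a ^ 2 * Real.sin (a / 2) ^ 2 = Real.cos (a / 2) ^ 2 := by
      rw [← h]; ring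
    nlinarith [sq_nonneg (Real.sin (a / 2))]
  have hquarter : 0.3209 < Real.sin (a / 4) :=
    calc (0.3209 : ℝ) < 0.32675 - 0.32675 ^ 3 / 6 := by norm_num
      _ < Real.sin 0.32675 := Real.sin_gt_sub_cube (by norm_num)
      _ ≤ Real.sin (a / 4) :=
        Real.sin_le_sin_of_le_of_le_pi_div_two (by linarith) (by linarith) (by linarith)
  have hlt : Real.cos (a / 2) < 0.7942 := by nlinarith
  nlinarith

theorem one_div_one_add_one_div_exp_one_lt : 1 / (1 + 1 / Real.exp 1) < 0.738 := by
  have he := Real.exp_one_lt_d9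
  have hpos := Real.exp_pos 1
  have hinv : 1 / 2.7182818286 < 1 / Real.exp 1 := one_div_lt_one_div_of_lt hpos he
  rw [div_lt_iff₀ (by positivity)]
  norm_num at hinv ⊢
  linarith

/-- There is a unique `a ∈ (0, π/2)` satisfying
`cos a + sin a / a = 1`, and this `a` satisfies
`1 - cos a > 0.738 > 1/(1 + 1/e)`. -/
theorem unique_root_and_bound :
    (∃! a : ℝ, a ∈ Set.Ioo 0 (Real.pi / 2) ∧ Real.cos a + Real.sin a / a = 1) ∧
    (∀ a : ℝ, a ∈ Set.Ioo 0 (Real.pi / 2) → Real.cos a + Real.sin a / a = 1 →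
      1 - Real.cos a > 0.738 ∧ (0.738 : ℝ) > 1 / (1 + 1 / Real.exp 1)) := by
  constructor
  · obtain ⟨a, ha, h⟩ := exists_mul_sin_half_eq_cos_half
    refine ⟨a, ⟨ha, (cos_add_sin_div_eq_one_iff ha).mpr h⟩, ?_⟩
    rintro b ⟨hb, hb_eq⟩
    rw [cos_add_sin_div_eq_one_iff hb] at hb_eq
    refine strictMonoOn_mul_sin_half_sub_cos_half.injOn
      (Set.Ioo_subset_Icc_self hb) (Set.Ioo_subset_Icc_self ha) ?_
    simp only [hb_eq, h, sub_self]
  · intro a ha h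
    have hcos := cos_lt_of_mul_sin_half_eq_cos_half ha
      ((cos_add_sin_div_eq_one_iff ha).mp h)
    exact ⟨by linarith, one_div_one_add_one_div_exp_one_lt⟩
end

section
/- Let h : [0,1] → [0,1] be continuous, strictly decreasing, strictly concave with h(0) = 1, and let F be a cumulative distribution function that is continuous and strictly increasing on a subinterval of [0,∞). For any positive integer n, the sequence of thresholds θ_i = F⁻¹(h(i/n)/h((i−1)/n)), 1 ≤ i ≤ n, is strictly decreasing: θ_i > θ_{i+1} for all 1 ≤ i ≤ n−1. -/
/-- Increments of a strictly concave function over intervals of equal length strictly decrease. -/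
theorem StrictConcaveOn.add_lt_add_of_shift {s : Set ℝ} {f : ℝ → ℝ} (hf : StrictConcaveOn ℝ s f)
    {a b d : ℝ} (ha : a ∈ s) (hbd : b + d ∈ s) (hd : 0 < d) (hab : a < b) :
    f a + f (b + d) < f (a + d) + f b := by
  have hL : 0 < b + d - a := by linarith
  have hne : a ≠ b + d := by linarith
  have ht : 0 < d / (b + d - a) := div_pos hd hL
  have hu : 0 < (b - a) / (b + d - a) := div_pos (sub_pos.2 hab) hL
  have htu : d / (b + d - a) + (b - a) / (b + d - a) = 1 := by field_simp; ring
  have hleft := hf.2 ha hbd hne hu ht (by rw [add_comm, htu])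
  have hright := hf.2 ha hbd hne ht hu htu
  simp only [smul_eq_mul] at hleft hright
  have el : (b - a) / (b + d - a) * a + d / (b + d - a) * (b + d) = a + d := by
    field_simp; ring
  have er : d / (b + d - a) * a + (b - a) / (b + d - a) * (b + d) = b := by
    field_simp; ring
  rw [el] at hleft
  rw [er] at hright
  have hsum : f a + f (b + d) =
      (d / (b + d - a) + (b - a) / (b + d - a)) * (f a + f (b + d)) := by rw [htu, one_mul]
  linarith

/-- Ratios of a positive, strictly decreasing, strictly concave function over a fixed step
strictly decrease. -/
theorem StrictConcaveOn.div_lt_div_of_shift {s : Set ℝ} {f : ℝ → ℝ} (hf : StrictConcaveOn ℝ s f)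
    (hanti : StrictAntiOn f s) (hpos : ∀ x ∈ s, 0 < f x) {a b d : ℝ} (ha : a ∈ s)
    (hbd : b + d ∈ s) (hd : 0 < d) (hab : a < b) :
    f (b + d) / f b < f (a + d) / f a := by
  have hmem : ∀ x, a ≤ x → x ≤ b + d → x ∈ s := fun x h₁ h₂ =>
    hf.1.ordConnected.out ha hbd ⟨h₁, h₂⟩
  have hb : b ∈ s := hmem b hab.le (by linarith)
  have had : a + d ∈ s := hmem (a + d) (by linarith) (by linarith)
  have hshift := hf.add_lt_add_of_shift ha hbd hd hab
  have hfab : f b < f a := hanti ha hb hab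
  have hfad : f (a + d) < f a := hanti ha had (by linarith)
  rw [div_lt_div_iff₀ (hpos b hb) (hpos a ha)]
  nlinarith [mul_pos (hpos a ha) (sub_pos.2 hshift), mul_pos (sub_pos.2 hfab) (sub_pos.2 hfad)]

/-- if `h : [0,1] → (0,1]` is continuous, strictly decreasing, strictly
concave with `h 0 = 1`, and `F` is a CDF continuous and strictly increasing on a
subinterval `[lo, hi]` of `[0,∞)`, then the thresholds
`θ_i = F⁻¹(h(i/n)/h((i−1)/n))` (expressed by `F (θ i) = h(i/n)/h((i−1)/n)` with
`θ i` in the subinterval) form a strictly decreasing sequence. -/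
theorem thresholds_strict_decreasing (h : ℝ → ℝ)
    (hcont : ContinuousOn h (Set.Icc (0:ℝ) 1))
    (hmap : ∀ s ∈ Set.Icc (0:ℝ) 1, h s ∈ Set.Ioc (0:ℝ) 1)
    (hanti : StrictAntiOn h (Set.Icc (0:ℝ) 1))
    (h0 : h 0 = 1)
    (hconc : StrictConcaveOn ℝ (Set.Icc (0:ℝ) 1) h)
    (F : ℝ → ℝ) (lo hi : ℝ) (hlo : 0 ≤ lo) (hlohi : lo < hi)
    (hFcont : ContinuousOn F (Set.Icc lo hi))
    (hFmono : StrictMonoOn F (Set.Icc lo hi))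
    (n : ℕ) (hn : 0 < n) (θ : Fin n → ℝ)
    (hθmem : ∀ i, θ i ∈ Set.Icc lo hi)
    (hθ : ∀ i : Fin n, F (θ i) = h (((i : ℕ) + 1 : ℝ) / n) / h (((i : ℕ) : ℝ) / n)) :
    ∀ i j : Fin n, i < j → θ j < θ i := by
  intro i j hij
  have hn' : (0 : ℝ) < n := Nat.cast_pos.2 hn
  have hij' : ((i : ℕ) : ℝ) < (j : ℕ) := Nat.cast_lt.2 hij
  have hj : ((j : ℕ) : ℝ) + 1 ≤ n := by exact_mod_cast j.isLt
  have hi0 : (0 : ℝ) ≤ (i : ℕ) := Nat.cast_nonneg _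
  rw [← hFmono.lt_iff_lt (hθmem j) (hθmem i), hθ, hθ, add_div, add_div]
  refine hconc.div_lt_div_of_shift hanti (fun x hx => (hmap x hx).1) ?_ ?_
    (one_div_pos.2 hn') (div_lt_div_of_pos_right hij' hn')
  · exact ⟨by positivity, (div_le_one hn').2 (by linarith)⟩
  · rw [← add_div]
    exact ⟨by positivity, (div_le_one hn').2 hj⟩
end

section
/- For every ε ∈ (0,1) there exists a natural number n_ε such that for every integer n ≥ n_ε and every real z with 0 ≤ z ≤ 1, one has 1 − (1−z)^n ≤ (1 − exp(−n·z))/(1−ε). (Equivalently: if X_1,…,X_n are i.i.d. with CDF F and G(x) = 1 − F(x), then Pr[max_i X_i ≥ x] = 1 − F(x)^n ≤ (1 − exp(−n·G(x)))/(1−ε) for all x.) -/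
/-- A multiplicative lower bound comparing `(1 - z) ^ n` with `exp (-n z)`. -/
theorem exp_neg_mul_one_sub_le_one_sub_pow (n : ℕ) {z : ℝ} (h0 : 0 ≤ z) (h1 : z ≤ 1) :
    Real.exp (-((n : ℝ) * z)) * (1 - n * z ^ 2) ≤ (1 - z) ^ n := by
  have hbern : 1 + (n : ℝ) * (-z ^ 2) ≤ (1 + -z ^ 2) ^ n :=
    one_add_mul_le_pow (by nlinarith) n
  have hbase : 1 + -z ^ 2 ≤ (1 - z) * Real.exp z := by
    nlinarith [Real.add_one_le_exp z]
  have hpow : (1 + -z ^ 2) ^ n ≤ ((1 - z) * Real.exp z) ^ n :=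
    pow_le_pow_left₀ (by nlinarith) hbase n
  rw [mul_pow, ← Real.exp_nat_mul] at hpow
  calc Real.exp (-((n : ℝ) * z)) * (1 - n * z ^ 2)
      ≤ Real.exp (-((n : ℝ) * z)) * ((1 - z) ^ n * Real.exp (n * z)) := by
        gcongr
        linarith
    _ = (1 - z) ^ n := by
        rw [mul_left_comm, ← Real.exp_add, neg_add_cancel, Real.exp_zero, mul_one]

/-- for every `ε ∈ (0,1)` there is `n₀` such that for all `n ≥ n₀` and
`z ∈ [0,1]`, `1 − (1−z)^n ≤ (1 − exp(−n·z))/(1−ε)`. -/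
theorem max_upper_bound (ε : ℝ) (hε : ε ∈ Set.Ioo (0:ℝ) 1) :
    ∃ n₀ : ℕ, ∀ n : ℕ, n₀ ≤ n → ∀ z ∈ Set.Icc (0:ℝ) 1,
      1 - (1 - z) ^ n ≤ (1 - Real.exp (-((n : ℝ) * z))) / (1 - ε) := by
  obtain ⟨hε0, hε1⟩ := hε
  refine ⟨⌈2 / ε⌉₊, fun n hn z ⟨h0, h1⟩ => ?_⟩
  have hnε : 2 ≤ (n : ℝ) * ε := (div_le_iff₀ hε0).1 (Nat.ceil_le.1 hn)
  have ht : 0 ≤ (n : ℝ) * z := by positivity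
  have hlower := exp_neg_mul_one_sub_le_one_sub_pow n h0 h1
  have hquad : (n : ℝ) * z ^ 2 ≤ ε * (Real.exp (n * z) - 1) := by
    have hscale : 2 * ((n : ℝ) * z ^ 2) ≤ n * ε * (n * z ^ 2) := by gcongr
    nlinarith [mul_le_mul_of_nonneg_left (Real.quadratic_le_exp_of_nonneg ht) hε0.le,
      mul_nonneg hε0.le ht]
  have herror : Real.exp (-((n : ℝ) * z)) * (n * z ^ 2) ≤
      ε * (1 - Real.exp (-((n : ℝ) * z))) := by
    calc Real.exp (-((n : ℝ) * z)) * (n * z ^ 2)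
        ≤ Real.exp (-((n : ℝ) * z)) * (ε * (Real.exp (n * z) - 1)) := by gcongr
      _ = ε * (Real.exp (-((n : ℝ) * z)) * Real.exp (n * z) - Real.exp (-((n : ℝ) * z))) := by
          ring
      _ = ε * (1 - Real.exp (-((n : ℝ) * z))) := by
          rw [← Real.exp_add, neg_add_cancel, Real.exp_zero]
  have hexp : Real.exp (-((n : ℝ) * z)) ≤ 1 := Real.exp_le_one_iff.2 (by linarith)
  have hgap : 1 - (1 - z) ^ n ≤ (1 + ε) * (1 - Real.exp (-((n : ℝ) * z))) := by linarith
  rw [le_div_iff₀ (by linarith)]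
  nlinarith [mul_le_mul_of_nonneg_right hgap (sub_nonneg.2 hε1.le),
    mul_nonneg (sq_nonneg ε) (sub_nonneg.2 hexp)]
end

section
/- Let a ∈ (0, π/2). For every ε ∈ (0,1), setting δ₀ = min(ε, ε·tan(a·ε)/(a·(1−ε)·sec²(a))), one has: for every δ with 0 < δ ≤ δ₀ and every s with ε + δ ≤ s ≤ 1, tan(a·(s−δ)) ≥ (1−ε)·tan(a·s). (Consequently the function h(s) = cos(a·s) satisfies the second defining property of a threshold function: h′(s−δ)/h(s−δ) ≤ (1−ε)·h′(s)/h(s) for such δ and s.) -/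
/-- On `[0, a] ⊂ [0, π/2)` the tangent is Lipschitz with constant `1 / cos² a`. -/
lemma tan_sub_tan_le_div_cos_sq {a x y : ℝ} (ha : a < Real.pi / 2) (hx : 0 ≤ x) (hxy : x ≤ y)
    (hy : y ≤ a) : Real.tan y - Real.tan x ≤ (y - x) / Real.cos a ^ 2 := by
  have hca : 0 < Real.cos a := Real.cos_pos_of_mem_Ioo ⟨by linarith, ha⟩
  have hay : Real.cos a ≤ Real.cos y :=
    Real.cos_le_cos_of_nonneg_of_le_pi (by linarith) (by linarith) hy
  have hax : Real.cos a ≤ Real.cos x :=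
    Real.cos_le_cos_of_nonneg_of_le_pi hx (by linarith) (by linarith)
  have hcy : 0 < Real.cos y := hca.trans_le hay
  have hcx : 0 < Real.cos x := hca.trans_le hax
  have hsub : Real.tan y - Real.tan x = Real.sin (y - x) / (Real.cos y * Real.cos x) := by
    rw [Real.tan_eq_sin_div_cos, Real.tan_eq_sin_div_cos, Real.sin_sub,
      div_sub_div _ _ hcy.ne' hcx.ne']
  rw [hsub, sq]
  have hsin : Real.sin (y - x) ≤ y - x := Real.sin_le (by linarith)
  have hnonneg : 0 ≤ y - x := by linarith
  gcongr

/-- for `a ∈ (0, π/2)` and `ε ∈ (0,1)`, setting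
`δ₀ = min(ε, ε·tan(a·ε)/(a·(1−ε)·sec²(a)))`, for every `0 < δ ≤ δ₀` and every
`s` with `ε + δ ≤ s ≤ 1`, one has `tan(a·(s−δ)) ≥ (1−ε)·tan(a·s)`.
(Here `sec² a = 1 / cos² a`.) -/
theorem tan_threshold_property (a : ℝ) (ha : a ∈ Set.Ioo 0 (Real.pi / 2))
    (ε : ℝ) (hε : ε ∈ Set.Ioo (0:ℝ) 1) :
    ∀ δ : ℝ, 0 < δ →
      δ ≤ min ε (ε * Real.tan (a * ε) / (a * (1 - ε) * (1 / Real.cos a ^ 2))) →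
      ∀ s : ℝ, ε + δ ≤ s → s ≤ 1 →
        Real.tan (a * (s - δ)) ≥ (1 - ε) * Real.tan (a * s) := by
  obtain ⟨ha0, ha1⟩ := ha
  obtain ⟨hε0, hε1⟩ := hε
  intro δ hδ hδ₀ s hs hs1
  have hca : 0 < Real.cos a := Real.cos_pos_of_mem_Ioo ⟨by linarith, ha1⟩
  have hε' : 0 < 1 - ε := by linarith
  have hbound : δ * (a * (1 - ε) * (1 / Real.cos a ^ 2)) ≤ ε * Real.tan (a * ε) :=
    (le_div_iff₀ (by positivity)).mp (hδ₀.trans (min_le_right _ _))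
  have has : a * s ≤ a := mul_le_of_le_one_right ha0.le hs1
  have hεs : a * ε ≤ a * (s - δ) := mul_le_mul_of_nonneg_left (by linarith) ha0.le
  have hss : a * (s - δ) ≤ a * s := mul_le_mul_of_nonneg_left (by linarith) ha0.le
  have haε : 0 < a * ε := mul_pos ha0 hε0
  have hlip := tan_sub_tan_le_div_cos_sq ha1 (haε.le.trans hεs) hss has
  have hmono : Real.tan (a * ε) ≤ Real.tan (a * (s - δ)) :=
    Real.strictMonoOn_tan.monotoneOn ⟨by linarith, by linarith⟩ ⟨by linarith, by linarith⟩ hεs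
  have hkey : (1 - ε) * (Real.tan (a * s) - Real.tan (a * (s - δ)))
      ≤ ε * Real.tan (a * (s - δ)) :=
    calc (1 - ε) * (Real.tan (a * s) - Real.tan (a * (s - δ)))
        ≤ (1 - ε) * ((a * s - a * (s - δ)) / Real.cos a ^ 2) :=
          mul_le_mul_of_nonneg_left hlip hε'.le
      _ = δ * (a * (1 - ε) * (1 / Real.cos a ^ 2)) := by ring
      _ ≤ ε * Real.tan (a * ε) := hbound
      _ ≤ ε * Real.tan (a * (s - δ)) := mul_le_mul_of_nonneg_left hmono hε0.le
  linarith
end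

section
/- Let a ∈ (0, π/2) be the unique root of cos(a) + sin(a)/a − 1 = 0 and set α = 1 − cos(a). Then for every s ∈ [0,1]: 1 − cos(a·s) + tan(a·s)·(sin(a) − sin(a·s)) ≥ α·(1 − exp(−a·tan(a·s))). (This is the third property of α-strong functions for h(s) = cos(a·s), for which h′(s)/h(s) = −a·tan(a·s) and ∫ₛ¹ h(r) dr = (sin(a) − sin(a·s))/a.) -/
open Real in
/-- The root of `cos a + sin a / a = 1` is at least `1.3`. -/
lemma thirteen_div_ten_le_of_sin_eq_mul_one_sub_cos {a : ℝ} (h0 : 0 < a) (h1 : a < π / 2)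
    (h : sin a = a * (1 - cos a)) : 13 / 10 ≤ a := by
  by_contra! hlt
  have hs : 0 < sin (a / 2) := sin_pos_of_pos_of_lt_pi (by linarith) (by linarith)
  have hcos : 0 < cos (a / 2) := cos_pos_of_mem_Ioo ⟨by linarith, by linarith⟩
  have half : a * sin (a / 2) = cos (a / 2) := by
    have e1 : sin a = 2 * sin (a / 2) * cos (a / 2) := by rw [← sin_two_mul]; ring_nf
    have e2 : cos a = 1 - 2 * sin (a / 2) ^ 2 := by
      rw [show cos a = cos (2 * (a / 2)) by ring_nf, cos_two_mul, sin_sq]; ring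
    rw [e1, e2] at h
    exact mul_left_cancel₀ hs.ne' (by linarith)
  have hsin_lt : sin (a / 2) ≤ sin (13 / 20) :=
    sin_le_sin_of_le_of_le_pi_div_two (by linarith) (by linarith [pi_gt_three]) (by linarith)
  have hcos_lt : cos (13 / 20) ≤ cos (a / 2) :=
    cos_le_cos_of_nonneg_of_le_pi (by linarith) (by linarith [pi_gt_three]) (by linarith)
  have bs := abs_le.1 (sin_bound (x := 13 / 40) (by norm_num [abs_le]))
  have bc := abs_le.1 (cos_bound (x := 13 / 40) (by norm_num [abs_le]))
  norm_num at bs bc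
  have d1 : sin (13 / 20) = 2 * sin (13 / 40) * cos (13 / 40) := by
    rw [← sin_two_mul]; norm_num
  have d2 : cos (13 / 20) = 1 - 2 * sin (13 / 40) ^ 2 := by
    rw [show (13 / 20 : ℝ) = 2 * (13 / 40) by norm_num, cos_two_mul, sin_sq]; ring
  have s1 : sin (13 / 40) ≤ 0.3199 := by linarith [bs.2]
  have s0 : 0 ≤ sin (13 / 40) := by linarith [bs.1]
  have c1 : cos (13 / 40) ≤ 0.9478 := by linarith [bc.2]
  have : a * sin (a / 2) < 13 / 10 * sin (13 / 20) := by nlinarith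
  nlinarith

lemma one_add_sq_sub_pow_four_le_sq {a : ℝ} (ha : 13 / 10 ≤ a) (w : ℝ) :
    1 + w ^ 2 - w ^ 4 ≤ (a * (1 + w ^ 2) - w) ^ 2 := by
  have h1 : 0 < 13 / 10 * (1 + w ^ 2) - w := by nlinarith [sq_nonneg (w - 1 / 2)]
  have h2 : 13 / 10 * (1 + w ^ 2) - w ≤ a * (1 + w ^ 2) - w := by gcongr
  have h3 : 1 + w ^ 2 - w ^ 4 ≤ (13 / 10 * (1 + w ^ 2) - w) ^ 2 := by
    nlinarith [sq_nonneg (w ^ 2 - w / 2), sq_nonneg (w ^ 2 + w / 4 - 5 / 16), sq_nonneg (w - 9 / 20),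
      sq_nonneg (w ^ 2 - 1 / 5)]
  exact h3.trans (pow_le_pow_left₀ h1.le h2 2)

open Real in
/-- The derivative estimate behind `antitoneOn_one_sub_cos_mul_exp_div_cos`; it becomes the
quartic inequality `one_add_sq_sub_pow_four_le_sq` in the variable `w = tan (x / 2)`. -/
lemma one_sub_cos_mul_le_sin {a x : ℝ} (ha : a < π / 2) (ha' : 13 / 10 ≤ a)
    (h : sin a = a * (1 - cos a)) (hx0 : 0 ≤ x) (hxa : x ≤ a) :
    (1 - cos (a - x)) * (a * (1 / cos x ^ 2) + sin x / cos x) ≤ sin (a - x) := by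
  have hcx : 0 < cos x := cos_pos_of_mem_Ioo ⟨by linarith, by linarith⟩
  have hsx : 0 ≤ sin x := sin_nonneg_of_nonneg_of_le_pi hx0 (by linarith)
  have hsax : 0 ≤ sin (a - x) := sin_nonneg_of_nonneg_of_le_pi (by linarith) (by linarith)
  obtain ⟨w, hw⟩ : ∃ w, w = sin x / (1 + cos x) := ⟨_, rfl⟩
  have hw0 : 0 ≤ w := by rw [hw]; positivity
  have hww : w ^ 2 * (1 + cos x) = 1 - cos x := by
    rw [hw]; field_simp; linarith [sin_sq_add_cos_sq x]
  have hcos : cos x = (1 - w ^ 2) / (1 + w ^ 2) := by field_simp; linarith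
  have hsin : sin x = 2 * w / (1 + w ^ 2) := by
    have : sin x = w * (1 + cos x) := by rw [hw]; field_simp
    rw [this, hcos]; field_simp; ring
  have hw1 : 0 < 1 - w ^ 2 := by nlinarith
  have hcne : 1 - cos a ≠ 0 := by
    have : cos a < 1 := by
      rw [← cos_zero]
      exact cos_lt_cos_of_nonneg_of_le_pi_div_two le_rfl ha.le (by linarith)
    linarith
  have hca' : a ^ 2 * (1 - cos a) = 1 + cos a := by
    apply mul_right_cancel₀ hcne
    have := sin_sq_add_cos_sq a
    rw [h] at this
    linarith
  have hca : cos a = (a ^ 2 - 1) / (1 + a ^ 2) := by field_simp; linarith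
  have hsa : sin a = 2 * a / (1 + a ^ 2) := by rw [h, hca]; field_simp; ring
  have e1 : sin (a - x) = 2 * (a + w) * (1 - a * w) / ((1 + a ^ 2) * (1 + w ^ 2)) := by
    rw [sin_sub, hsa, hca, hsin, hcos]; field_simp; ring
  have e2 : 1 - cos (a - x) = 2 * (1 - a * w) ^ 2 / ((1 + a ^ 2) * (1 + w ^ 2)) := by
    rw [cos_sub, hsa, hca, hsin, hcos]; field_simp; ring
  have hawn : 0 ≤ 1 - a * w := by
    by_contra! hneg
    have : sin (a - x) < 0 := by
      rw [e1]
      exact div_neg_of_neg_of_pos (mul_neg_of_pos_of_neg (by linarith) hneg) (by positivity)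
    linarith
  have key : (1 - a * w) * (a * (1 + w ^ 2) ^ 2 + 2 * w * (1 - w ^ 2)) ≤
      (a + w) * (1 - w ^ 2) ^ 2 := by
    have := mul_nonneg hw0 (sub_nonneg.2 (one_add_sq_sub_pow_four_le_sq ha' w))
    linarith
  have e3 : sin (a - x) - (1 - cos (a - x)) * (a * (1 / cos x ^ 2) + sin x / cos x) =
      2 * (1 - a * w) / ((1 + a ^ 2) * (1 + w ^ 2)) / (1 - w ^ 2) ^ 2 *
      ((a + w) * (1 - w ^ 2) ^ 2 -
        (1 - a * w) * (a * (1 + w ^ 2) ^ 2 + 2 * w * (1 - w ^ 2))) := by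
    rw [e1, e2, hsin, hcos]; field_simp
  have := mul_nonneg (show 0 ≤ 2 * (1 - a * w) / ((1 + a ^ 2) * (1 + w ^ 2)) / (1 - w ^ 2) ^ 2 by
    positivity) (sub_nonneg.2 key)
  linarith

open Real in
lemma antitoneOn_one_sub_cos_mul_exp_div_cos {a : ℝ} (ha0 : 0 < a) (ha : a < π / 2)
    (h : sin a = a * (1 - cos a)) :
    AntitoneOn (fun x => (1 - cos (a - x)) * exp (a * tan x) / cos x) (Set.Icc 0 a) := by
  have ha' := thirteen_div_ten_le_of_sin_eq_mul_one_sub_cos ha0 ha h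
  have hd : ∀ x ∈ Set.Icc 0 a, HasDerivAt
      (fun x => (1 - cos (a - x)) * exp (a * tan x) / cos x)
      (exp (a * tan x) / cos x *
        ((1 - cos (a - x)) * (a * (1 / cos x ^ 2) + sin x / cos x) - sin (a - x))) x := by
    intro x hx
    have hcx : cos x ≠ 0 := (cos_pos_of_mem_Ioo ⟨by linarith [hx.1], by linarith [hx.2]⟩).ne'
    have d1 := (((hasDerivAt_id x).const_sub a).cos).const_sub 1
    have d2 := ((hasDerivAt_tan hcx).const_mul a).exp
    refine ((d1.mul d2).div (hasDerivAt_cos x) hcx).congr_deriv ?_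
    simp only [id, Pi.mul_apply]
    field_simp
    ring
  refine antitoneOn_of_deriv_nonpos (convex_Icc 0 a)
    (fun x hx => (hd x hx).continuousAt.continuousWithinAt)
    (fun x hx => (hd x (interior_subset hx)).differentiableAt.differentiableWithinAt) ?_
  intro x hx
  have hx := interior_subset hx
  have hcx : 0 < cos x := cos_pos_of_mem_Ioo ⟨by linarith [hx.1], by linarith [hx.2]⟩
  rw [(hd x hx).deriv]
  exact mul_nonpos_of_nonneg_of_nonpos (by positivity)
    (sub_nonpos.2 (one_sub_cos_mul_le_sin ha ha' h hx.1 hx.2))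

/-- for the root `a ∈ (0, π/2)` of `cos a + sin a / a − 1 = 0` and
`α = 1 − cos a`, for every `s ∈ [0,1]`:
`1 − cos(as) + tan(as)·(sin a − sin(as)) ≥ α·(1 − exp(−a·tan(as)))`. -/
theorem third_property_cos (a : ℝ) (ha : a ∈ Set.Ioo 0 (Real.pi / 2))
    (haroot : Real.cos a + Real.sin a / a - 1 = 0)
    (s : ℝ) (hs : s ∈ Set.Icc (0:ℝ) 1) :
    1 - Real.cos (a * s) + Real.tan (a * s) * (Real.sin a - Real.sin (a * s)) ≥
      (1 - Real.cos a) * (1 - Real.exp (-(a * Real.tan (a * s)))) := by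
  obtain ⟨ha0, ha1⟩ := ha
  have h : Real.sin a = a * (1 - Real.cos a) := by
    field_simp at haroot
    linarith
  have hx : a * s ∈ Set.Icc 0 a := ⟨mul_nonneg ha0.le hs.1, mul_le_of_le_one_right ha0.le hs.2⟩
  generalize a * s = x at hx
  have hcx : 0 < Real.cos x :=
    Real.cos_pos_of_mem_Ioo ⟨by linarith [hx.1], by linarith [hx.2]⟩
  have hM := antitoneOn_one_sub_cos_mul_exp_div_cos ha0 ha1 h
    (Set.left_mem_Icc.2 ha0.le) hx hx.1
  simp only [sub_zero, Real.tan_zero, mul_zero, Real.exp_zero, mul_one, Real.cos_zero,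
    div_one] at hM
  have hE : (1 - Real.cos (a - x)) / Real.cos x ≤
      (1 - Real.cos a) * Real.exp (-(a * Real.tan x)) := by
    rw [Real.exp_neg, ← div_eq_mul_inv, le_div_iff₀ (Real.exp_pos _)]
    calc _ = (1 - Real.cos (a - x)) * Real.exp (a * Real.tan x) / Real.cos x := by ring
      _ ≤ _ := hM
  have hid : 1 - Real.cos x + Real.tan x * (Real.sin a - Real.sin x) =
      1 - Real.cos a - (1 - Real.cos (a - x)) / Real.cos x := by
    rw [Real.tan_eq_sin_div_cos, Real.cos_sub]
    field_simp
    linarith [Real.sin_sq_add_cos_sq x]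
  rw [hid]
  linarith
end

section
/- Let a ∈ (0, π/2) be the unique root of cos(a) + sin(a)/a − 1 = 0 and set α = 1 − cos(a). Define A(w) = (1 − α + α·a·w + α·exp(−a·w))² − 1 − w². Then A(w) ≥ 0 for every real w with 0 ≤ w ≤ tan(a). -/
/-- A lower bound for `exp` at a nonpositive rational point, checked in rational arithmetic. -/
lemma le_exp_neg_div_of_pow_mul_le {r : ℝ} (m n : ℕ) (hn : n ≠ 0)
    (h : r ^ n * (2.7182818286 : ℝ) ^ m ≤ 1) : r ≤ Real.exp (-(m / n : ℝ)) := by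
  have hexp : Real.exp (-(m / n : ℝ)) ^ n * Real.exp 1 ^ m = 1 := by
    rw [← Real.exp_nat_mul, ← Real.exp_nat_mul, ← Real.exp_add, Real.exp_eq_one_iff]
    field_simp
    ring
  by_contra! hlt
  have hpow := pow_lt_pow_left₀ hlt (Real.exp_pos _).le hn
  have hone : Real.exp 1 ^ m ≤ (2.7182818286 : ℝ) ^ m :=
    pow_le_pow_left₀ (Real.exp_pos _).le Real.exp_one_lt_d9.le m
  have hr : 0 < r ^ n := (pow_pos (Real.exp_pos _) n).trans hpow
  have := mul_lt_mul_of_pos_right hpow (pow_pos (Real.exp_pos 1) m)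
  have := mul_le_mul_of_nonneg_left hone hr.le
  linarith

/-- The cubic Taylor polynomial bounds `exp (-x)` from below for `x ≥ 0`. -/
lemma cubic_le_exp_neg {x : ℝ} (hx : 0 ≤ x) :
    1 - x + x ^ 2 / 2 - x ^ 3 / 6 ≤ Real.exp (-x) := by
  have hderiv (t : ℝ) : HasDerivAt
      (fun t : ℝ ↦ Real.exp t * (1 - t + t ^ 2 / 2 - t ^ 3 / 6))
      (-(Real.exp t * t ^ 3 / 6)) t := by
    have h := (Real.hasDerivAt_exp t).mul
      ((((hasDerivAt_id t).const_sub 1).add ((hasDerivAt_pow 2 t).div_const 2)).sub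
        ((hasDerivAt_pow 3 t).div_const 6))
    refine h.congr_deriv ?_
    simp only [id, Pi.add_apply, Pi.sub_apply]
    norm_num
    ring
  have hanti : AntitoneOn (fun t : ℝ ↦ Real.exp t * (1 - t + t ^ 2 / 2 - t ^ 3 / 6))
      (Set.Ici 0) := by
    refine antitoneOn_of_deriv_nonpos (convex_Ici 0)
      (fun t _ ↦ (hderiv t).continuousAt.continuousWithinAt)
      (fun t _ ↦ (hderiv t).differentiableAt.differentiableWithinAt) fun t ht ↦ ?_
    rw [interior_Ici, Set.mem_Ioi] at ht
    rw [(hderiv t).deriv]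
    have := Real.exp_pos t
    exact neg_nonpos.2 (by positivity)
  have h := hanti Set.self_mem_Ici hx hx
  simp only [Real.exp_zero] at h
  rw [Real.exp_neg, ← one_div, le_div_iff₀ (Real.exp_pos x)]
  linarith

/-- Sine bounds on `[0, 1]` with quintic error. -/
lemma sin_mem_Icc {x : ℝ} (h0 : 0 ≤ x) (h1 : x ≤ 1) :
    Real.sin x ∈ Set.Icc (x - x ^ 3 / 6 - x ^ 5 / 100) (x - x ^ 3 / 6 + x ^ 5 / 100) := by
  have h := Real.sin_bound (x := x) (by rwa [abs_of_nonneg h0])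
  rw [abs_of_nonneg h0, abs_le] at h
  exact ⟨by linarith [h.1], by linarith [h.2]⟩

/-- The duplication formulas express `sin` and `cos` at `x` through sines at `x / 2` and `x / 4`. -/
lemma sin_cos_eq_of_half_quarter (x : ℝ) :
    Real.sin x = 2 * Real.sin (x / 2) * (1 - 2 * Real.sin (x / 4) ^ 2) ∧
      Real.cos x = 1 - 2 * Real.sin (x / 2) ^ 2 := by
  have hs := Real.sin_two_mul (x / 2)
  have hc := Real.cos_two_mul_eq_one_sub (x / 2)
  have hc' := Real.cos_two_mul_eq_one_sub (x / 4)
  rw [show 2 * (x / 2) = x by ring] at hs hc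
  rw [show 2 * (x / 4) = x / 2 by ring] at hc'
  exact ⟨by rw [hs, hc'], hc⟩

lemma mul_sin_half_lt_cos_half : (1.3065 : ℝ) * Real.sin (1.3065 / 2) < Real.cos (1.3065 / 2) := by
  obtain ⟨hs, hc⟩ := sin_cos_eq_of_half_quarter (1.3065 / 2)
  have h1 := sin_mem_Icc (x := 1.3065 / 2 / 2) (by norm_num) (by norm_num)
  have h2 := sin_mem_Icc (x := 1.3065 / 2 / 4) (by norm_num) (by norm_num)
  rw [hs, hc]
  generalize Real.sin (1.3065 / 2 / 2) = u at *
  generalize Real.sin (1.3065 / 2 / 4) = v at *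
  norm_num at h1 h2
  have hu : 0.3207 < u ∧ u < 0.32086 := ⟨by linarith, by linarith⟩
  have hv : 0.16258 < v := by linarith
  have hv2 : (0.16258 : ℝ) ^ 2 < v ^ 2 := by gcongr
  have hu2 : u ^ 2 < (0.32086 : ℝ) ^ 2 := by gcongr; exacts [by linarith, hu.2]
  nlinarith

lemma cos_half_lt_mul_sin_half : Real.cos (1.3068 / 2) < (1.3068 : ℝ) * Real.sin (1.3068 / 2) := by
  obtain ⟨hs, hc⟩ := sin_cos_eq_of_half_quarter (1.3068 / 2)
  have h1 := Real.sin_ge_sub_cube (x := 1.3068 / 2 / 2) (by norm_num)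
  have h2 := sin_mem_Icc (x := 1.3068 / 2 / 4) (by norm_num) (by norm_num)
  rw [hs, hc]
  generalize Real.sin (1.3068 / 2 / 2) = u at *
  generalize Real.sin (1.3068 / 2 / 4) = v at *
  norm_num at h1 h2
  have hu : 0.32088 < u := by linarith
  have hv : 0 < v ∧ v < 0.16263 := ⟨by linarith, by linarith⟩
  have hv2 : v ^ 2 < (0.16263 : ℝ) ^ 2 := by gcongr; exacts [hv.1.le, hv.2]
  have hu2 : (0.32088 : ℝ) ^ 2 < u ^ 2 := by gcongr
  nlinarith

/-- The root equation in half-angle form. -/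
lemma mul_sin_half_eq_cos_half {a : ℝ} (ha : a ∈ Set.Ioo 0 (Real.pi / 2))
    (h : Real.cos a + Real.sin a / a - 1 = 0) :
    a * Real.sin (a / 2) = Real.cos (a / 2) := by
  obtain ⟨h0, h1⟩ := ha
  have hs : 0 < Real.sin (a / 2) := Real.sin_pos_of_pos_of_lt_pi (by linarith) (by linarith)
  have hc : Real.cos a = 1 - 2 * Real.sin (a / 2) ^ 2 := by
    have := Real.cos_sq_add_sin_sq (a / 2)
    rw [show a = 2 * (a / 2) by ring, Real.cos_two_mul]
    ring_nf at this ⊢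
    linarith
  have hsin : Real.sin a = 2 * Real.sin (a / 2) * Real.cos (a / 2) := by
    rw [← Real.sin_two_mul]; congr 1; ring
  rw [hc, hsin] at h
  field_simp at h
  have : Real.sin (a / 2) * (a * Real.sin (a / 2)) = Real.sin (a / 2) * Real.cos (a / 2) := by
    linarith
  exact mul_left_cancel₀ hs.ne' this

/-- Localization of the root. -/
lemma root_mem_Ioo {a : ℝ} (ha : a ∈ Set.Ioo 0 (Real.pi / 2))
    (h : a * Real.sin (a / 2) = Real.cos (a / 2)) : a ∈ Set.Ioo (1.3065 : ℝ) 1.3068 := by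
  obtain ⟨h0, h1⟩ := ha
  have hpi := Real.pi_gt_three
  have hs : 0 < Real.sin (a / 2) := Real.sin_pos_of_pos_of_lt_pi (by linarith) (by linarith)
  constructor
  · by_contra! hle
    have hsin := Real.sin_le_sin_of_le_of_le_pi_div_two (x := a / 2) (y := 1.3065 / 2)
      (by linarith) (by linarith) (by linarith)
    have hcos := Real.cos_le_cos_of_nonneg_of_le_pi (x := a / 2) (y := 1.3065 / 2)
      (by linarith) (by linarith) (by linarith)
    have hmul : a * Real.sin (a / 2) ≤ 1.3065 * Real.sin (1.3065 / 2) := by gcongr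
    linarith [mul_sin_half_lt_cos_half]
  · by_contra! hge
    have hsin := Real.sin_le_sin_of_le_of_le_pi_div_two (x := 1.3068 / 2) (y := a / 2)
      (by linarith) (by linarith) (by linarith)
    have hcos := Real.cos_le_cos_of_nonneg_of_le_pi (x := 1.3068 / 2) (y := a / 2)
      (by linarith) (by linarith) (by linarith)
    have hmul : 1.3068 * Real.sin (1.3068 / 2) ≤ a * Real.sin (a / 2) :=
      mul_le_mul hge hsin (Real.sin_nonneg_of_nonneg_of_le_pi (by norm_num) (by linarith)) h0.le
    linarith [cos_half_lt_mul_sin_half]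

/-- The root equation makes `1 - cos a` a rational function of `a`. -/
lemma one_sub_cos_mul_eq_two {a : ℝ} (h : a * Real.sin (a / 2) = Real.cos (a / 2)) :
    (1 - Real.cos a) * (a ^ 2 + 1) = 2 := by
  have hc := Real.cos_two_mul_eq_one_sub (a / 2)
  rw [show 2 * (a / 2) = a by ring] at hc
  have hsq := Real.sin_sq_add_cos_sq (a / 2)
  rw [← h] at hsq
  rw [hc]
  linear_combination 2 * hsq

/-- The tangent line of `x ↦ exp (-x)` at `m / n`, with a rational lower bound for its value. -/
lemma tangent_le_exp_neg {r x : ℝ} (m n : ℕ) (hn : n ≠ 0)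
    (hx : x ≤ m / n + 1) (h : r ^ n * (2.7182818286 : ℝ) ^ m ≤ 1) :
    r * (1 + m / n - x) ≤ Real.exp (-x) := by
  calc r * (1 + m / n - x) ≤ Real.exp (-(m / n : ℝ)) * (1 + m / n - x) :=
        mul_le_mul_of_nonneg_right (le_exp_neg_div_of_pow_mul_le m n hn h) (by linarith)
    _ ≤ Real.exp (-(m / n : ℝ)) * Real.exp (m / n - x) := by
        have := Real.add_one_le_exp (m / n - x)
        gcongr
        linarith
    _ = Real.exp (-x) := by rw [← Real.exp_add]; ring_nf

/-- A square of an affine function of slope at most one in absolute value dominates `1 + w ^ 2` on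
an interval as soon as it does so at the endpoints. -/
lemma one_add_sq_le_sq_of_endpoints {q k w l u : ℝ} (hk : k ^ 2 ≤ 1) (hlw : l ≤ w) (hwu : w ≤ u)
    (hL : 1 + l ^ 2 ≤ (q + k * l) ^ 2) (hU : 1 + u ^ 2 ≤ (q + k * u) ^ 2) :
    1 + w ^ 2 ≤ (q + k * w) ^ 2 := by
  rcases hlw.eq_or_lt with rfl | hlt
  · exact hL
  have hpos : 0 < u - l := by linarith
  refine le_of_mul_le_mul_left ?_ hpos
  linarith [mul_le_mul_of_nonneg_left hL (sub_nonneg.2 hwu),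
    mul_le_mul_of_nonneg_left hU (sub_nonneg.2 hlw),
    mul_nonneg (mul_nonneg (sub_nonneg.2 hk) hpos.le)
      (mul_nonneg (sub_nonneg.2 hlw) (sub_nonneg.2 hwu))]

/-- The exponential supplies the gap to the hyperbola away from the origin. -/
lemma one_add_sq_le_sq_of_tangent {C S P E w l u r d : ℝ} (hC : 0.2611 ≤ C) (hS : 0.9652 ≤ S)
    (hP : 0.7385 ≤ P) (hE : 0 ≤ E) (hl : 0 ≤ l) (hlw : l ≤ w) (hwu : w ≤ u)
    (hr : 0 ≤ r) (hr' : r ≤ 1) (hrE : r * (d - 1.3068 * w) ≤ E) (hd : 0 ≤ d)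
    (hL : 1 + l ^ 2 ≤ (0.2611 + 0.9652 * l + 0.7385 * (r * (d - 1.3068 * l))) ^ 2)
    (hU : 1 + u ^ 2 ≤ (0.2611 + 0.9652 * u + 0.7385 * (r * (d - 1.3068 * u))) ^ 2) :
    1 + w ^ 2 ≤ (C + S * w + P * E) ^ 2 := by
  have hdE : 0 ≤ 0.7385 * (E - r * (d - 1.3068 * w)) := by linarith
  have hPE : 0 ≤ (P - 0.7385) * E := mul_nonneg (by linarith) hE
  have hSw : 0 ≤ (S - 0.9652) * w := mul_nonneg (by linarith) (by linarith)
  have hrw : r * w ≤ w := mul_le_of_le_one_left (by linarith) hr'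
  have hrd : 0 ≤ r * d := mul_nonneg hr hd
  have hle : 0.2611 + 0.9652 * w + 0.7385 * (r * (d - 1.3068 * w)) ≤ C + S * w + P * E := by
    linarith
  have hpos : 0 ≤ 0.2611 + 0.9652 * w + 0.7385 * (r * (d - 1.3068 * w)) := by
    nlinarith
  refine le_trans ?_ (pow_le_pow_left₀ hpos hle 2)
  have hk : (0.9652 - 0.7385 * r * 1.3068) ^ 2 ≤ 1 := by
    rw [sq_le_one_iff_abs_le_one, abs_le]
    constructor <;> linarith
  generalize hk' : 0.9652 - 0.7385 * r * 1.3068 = k at hk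
  generalize hq : 0.2611 + 0.7385 * r * d = q
  have heq (x : ℝ) : 0.2611 + 0.9652 * x + 0.7385 * (r * (d - 1.3068 * x)) = q + k * x := by
    rw [← hk', ← hq]; ring
  rw [heq] at hL hU ⊢
  exact one_add_sq_le_sq_of_endpoints hk hlw hwu hL hU

/-- for the root `a ∈ (0, π/2)` of `cos a + sin a / a − 1 = 0` and
`α = 1 − cos a`, the function `A(w) = (1 − α + α·a·w + α·exp(−a·w))² − 1 − w²`
is nonnegative on `[0, tan a]`. -/
theorem A_nonneg (a : ℝ) (ha : a ∈ Set.Ioo 0 (Real.pi / 2))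
    (haroot : Real.cos a + Real.sin a / a - 1 = 0)
    (w : ℝ) (hw0 : 0 ≤ w) (hw1 : w ≤ Real.tan a) :
    (1 - (1 - Real.cos a) + (1 - Real.cos a) * a * w +
        (1 - Real.cos a) * Real.exp (-(a * w))) ^ 2 - 1 - w ^ 2 ≥ 0 := by
  have hhalf := mul_sin_half_eq_cos_half ha haroot
  obtain ⟨hal, hau⟩ := root_mem_Ioo ha hhalf
  have hP := one_sub_cos_mul_eq_two hhalf
  have hsin : Real.sin a = (1 - Real.cos a) * a := by
    have := ha.1.ne'
    field_simp at haroot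
    linarith
  rw [Real.tan_eq_sin_div_cos, hsin] at hw1
  generalize hPdef : 1 - Real.cos a = P at *
  have hcos : Real.cos a = 1 - P := by linarith
  rw [hcos] at hw1
  have hP1 : 0.7385 ≤ P := by nlinarith
  have hP2 : P ≤ 0.7389 := by nlinarith
  have hPa : 0.9652 ≤ P * a := by nlinarith
  have hPa' : P * a ≤ 0.9656 := by nlinarith
  have hw : w ≤ 3.7 := by
    refine hw1.trans ?_
    rw [div_le_iff₀ (by linarith)]
    linarith
  have haw : a * w ≤ 1.3068 * w := by gcongr
  have haw0 : 0 ≤ a * w := mul_nonneg (by linarith) hw0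
  suffices 1 + w ^ 2 ≤ ((1 - P) + P * a * w + P * Real.exp (-(a * w))) ^ 2 by linarith
  rcases le_total w 0.45 with h | h
  · have hexp := mul_le_mul_of_nonneg_left (cubic_le_exp_neg haw0) (by linarith : 0 ≤ P)
    have hcoef : 0 ≤ P * a ^ 2 - 1 - P * a ^ 3 * w / 3 := by
      have hPa2 : P * a ^ 2 = 2 - P := by linarith
      have hfactor : P * a ^ 2 - 1 - P * a ^ 3 * w / 3 = (2 - P) * (1 - a * w / 3) - 1 := by
        linear_combination (1 - a * w / 3) * hPa2
      rw [hfactor]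
      nlinarith
    have hlow : 1 + w ^ 2 / 2 ≤ (1 - P) + P * a * w + P * Real.exp (-(a * w)) := by
      linarith [mul_nonneg (sq_nonneg w) hcoef]
    nlinarith [pow_le_pow_left₀ (by positivity) hlow 2, sq_nonneg (w ^ 2)]
  have tangent_case (l u r : ℝ) (m n : ℕ) (hn : n ≠ 0) (hl : 0 ≤ l) (hlw : l ≤ w)
      (hwu : w ≤ u) (hr : 0 ≤ r) (hr1 : r ≤ 1) (hu : 1.3068 * u ≤ m / n + 1)
      (hre : r ^ n * (2.7182818286 : ℝ) ^ m ≤ 1)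
      (hL : 1 + l ^ 2 ≤ (0.2611 + 0.9652 * l + 0.7385 * (r * (1 + m / n - 1.3068 * l))) ^ 2)
      (hU : 1 + u ^ 2 ≤ (0.2611 + 0.9652 * u + 0.7385 * (r * (1 + m / n - 1.3068 * u))) ^ 2) :
      1 + w ^ 2 ≤ ((1 - P) + P * a * w + P * Real.exp (-(a * w))) ^ 2 := by
    refine one_add_sq_le_sq_of_tangent (by linarith) hPa hP1 (Real.exp_pos _).le hl hlw hwu hr hr1
      ?_ (by positivity) hL hU
    refine le_trans ?_ (tangent_le_exp_neg m n hn (by linarith) hre)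
    gcongr
  rcases le_total w 0.82 with h1 | h1
  · exact tangent_case 0.45 0.82 0.4493 4 5 (by norm_num) (by norm_num) h h1
      (by norm_num) (by norm_num) (by norm_num) (by norm_num) (by norm_num) (by norm_num)
  rcases le_total w 1.33 with h2 | h2
  · exact tangent_case 0.82 1.33 0.2465 7 5 (by norm_num) (by norm_num) h1 h2
      (by norm_num) (by norm_num) (by norm_num) (by norm_num) (by norm_num) (by norm_num)
  rcases le_total w 2.08 with h3 | h3
  · exact tangent_case 1.33 2.08 0.1108 11 5 (by norm_num) (by norm_num) h2 h3
      (by norm_num) (by norm_num) (by norm_num) (by norm_num) (by norm_num) (by norm_num)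
  rcases le_total w 3.36 with h4 | h4
  · exact tangent_case 2.08 3.36 0.0301 7 2 (by norm_num) (by norm_num) h3 h4
      (by norm_num) (by norm_num) (by norm_num) (by norm_num) (by norm_num) (by norm_num)
  · exact tangent_case 3.36 3.7 0.0111 9 2 (by norm_num) (by norm_num) h4 hw
      (by norm_num) (by norm_num) (by norm_num) (by norm_num) (by norm_num) (by norm_num)
end

section
/- Let a ∈ (0, π/2). For every positive integer m and every integer i with 0 ≤ i < m: 1 − cos(a·(i+1)/m)/cos(a·i/m) ≤ a·tan(a)/m. (Equivalently, for h(s) = cos(a·s) and thresholds built from h with q_j = h(j/m), one has G(θ_{i+1}) = 1 − q_{i+1}/q_i ≤ a·tan(a)/m.) -/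
/-- The relative decrease of the cosine between `x ≤ y` in `[0, a]`, with `a < π / 2`, is at most
`(y - x) * tan a`. -/
theorem one_sub_cos_div_cos_le {a x y : ℝ} (ha : a < Real.pi / 2) (hx : 0 ≤ x) (hxy : x ≤ y)
    (hya : y ≤ a) : 1 - Real.cos y / Real.cos x ≤ (y - x) * Real.tan a := by
  have hpi := Real.pi_pos
  have hcosa : 0 < Real.cos a := Real.cos_pos_of_mem_Ioo ⟨by linarith, ha⟩
  have hcos : Real.cos a ≤ Real.cos x :=
    Real.cos_le_cos_of_nonneg_of_le_pi hx (by linarith) (by linarith)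
  have hsin : Real.sin ((x + y) / 2) ≤ Real.sin a :=
    Real.sin_le_sin_of_le_of_le_pi_div_two (by linarith) ha.le (by linarith)
  have hsin_nonneg : 0 ≤ Real.sin ((x + y) / 2) :=
    Real.sin_nonneg_of_nonneg_of_le_pi (by linarith) (by linarith)
  have hsin_half : Real.sin ((y - x) / 2) ≤ (y - x) / 2 := Real.sin_le (by linarith)
  have hdiff : Real.cos x - Real.cos y
      = 2 * Real.sin ((x + y) / 2) * Real.sin ((y - x) / 2) := by
    rw [Real.cos_sub_cos, ← neg_sub y x, neg_div, Real.sin_neg]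
    ring
  calc 1 - Real.cos y / Real.cos x
      = 2 * Real.sin ((x + y) / 2) * Real.sin ((y - x) / 2) / Real.cos x := by
        rw [← hdiff, sub_div, div_self (hcosa.trans_le hcos).ne']
    _ ≤ 2 * Real.sin ((x + y) / 2) * ((y - x) / 2) / Real.cos x := by
        have := hcosa.trans_le hcos
        gcongr
    _ = (y - x) * (Real.sin ((x + y) / 2) / Real.cos x) := by ring
    _ ≤ (y - x) * (Real.sin a / Real.cos a) :=
        mul_le_mul_of_nonneg_left
          (div_le_div₀ (hsin_nonneg.trans hsin) hsin hcosa hcos) (by linarith)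
    _ = (y - x) * Real.tan a := by rw [Real.tan_eq_sin_div_cos]

/-- for `a ∈ (0, π/2)`, every positive integer `m` and `0 ≤ i < m`,
`1 − cos(a(i+1)/m)/cos(a·i/m) ≤ a·tan(a)/m`. -/
theorem one_sub_cos_ratio_le (a : ℝ) (ha : a ∈ Set.Ioo 0 (Real.pi / 2))
    (m : ℕ) (hm : 0 < m) (i : ℕ) (hi : i < m) :
    1 - Real.cos (a * (i + 1) / m) / Real.cos (a * i / m) ≤ a * Real.tan a / m := by
  obtain ⟨ha0, ha1⟩ := ha
  have hm' : (0 : ℝ) < m := by exact_mod_cast hm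
  have hi' : (i : ℝ) + 1 ≤ m := by exact_mod_cast hi
  have hle : a * i / m ≤ a * (i + 1) / m := by
    gcongr
    linarith
  have hlast : a * (i + 1) / m ≤ a := by
    rw [div_le_iff₀ hm']
    gcongr
  calc 1 - Real.cos (a * (i + 1) / m) / Real.cos (a * i / m)
      ≤ (a * (i + 1) / m - a * i / m) * Real.tan a :=
        one_sub_cos_div_cos_le ha1 (by positivity) hle hlast
    _ = a * Real.tan a / m := by ring
end
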